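/- Let n ≥ 1, p ≥ 1 and s ≥ 1 be integers with n ≥ p + 4s + 2. Then the functions Z ↦ tr(Y(Z)^{−s}) and Z ↦ tr(Y(Z)^{−(s−1)}) are μ_{n,p}-integrable, and (1 − (p+1)·s/n)·E[tr(Y^{−s})] ≤ E[tr(Y^{−(s−1)})]. -/

import Mathlib

open MeasureTheory Matrix Filter

noncomputable section

/-- The law `μ_{n,p}` of an `n × p` matrix with independent standard Gaussian entries. -/
def gaussEnsemble (n p : ℕ) : Measure (Fin n → Fin p → ℝ) :=
  Measure.pi fun _ => Measure.pi fun _ => ProbabilityTheory.gaussianReal 0 1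

/-- `Y(Z) = (1/n) Zᵀ Z`, the Wishart matrix `W_p(n, I_p/n)` built from the Gaussian matrix `Z`. -/
def wishartOf {n p : ℕ} (Z : Fin n → Fin p → ℝ) : Matrix (Fin p) (Fin p) ℝ :=
  (n : ℝ)⁻¹ • ((Matrix.of Z)ᵀ * Matrix.of Z)

open ProbabilityTheory Topology

theorem gauss_hasDerivAt (x : ℝ) :
    HasDerivAt (gaussianPDFReal 0 1) (-x * gaussianPDFReal 0 1 x) x := by
  rw [gaussianPDFReal_def]
  have h1 : HasDerivAt (fun x : ℝ => -(x - 0) ^ 2 / (2 * ((1 : NNReal) : ℝ))) (-x) x := by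
    have := (((hasDerivAt_id x).sub_const 0).pow 2).neg.div_const (2 * ((1 : NNReal) : ℝ))
    refine this.congr_deriv ?_
    simp; ring
  refine (h1.exp.const_mul _).congr_deriv ?_
  ring

theorem integrable_gauss_iff (f : ℝ → ℝ) :
    Integrable f (gaussianReal 0 1) ↔ Integrable (fun x => gaussianPDFReal 0 1 x * f x) := by
  rw [gaussianReal_of_var_ne_zero _ (by simp)]
  rw [show gaussianPDF 0 1 = fun x => ((Real.toNNReal (gaussianPDFReal 0 1 x) : NNReal) : ENNReal) from rfl]
  rw [integrable_withDensity_iff_integrable_smul (by fun_prop)]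
  simp only [NNReal.smul_def, smul_eq_mul, Real.coe_toNNReal _ (gaussianPDFReal_nonneg 0 1 _)]

theorem stein_one (f f' : ℝ → ℝ) (hf : ∀ x, HasDerivAt f (f' x) x)
    (h0 : Integrable f (gaussianReal 0 1)) (h1 : Integrable f' (gaussianReal 0 1))
    (h2 : Integrable (fun x => x * f x) (gaussianReal 0 1)) :
    ∫ x, x * f x ∂gaussianReal 0 1 = ∫ x, f' x ∂gaussianReal 0 1 := by
  rw [integrable_gauss_iff] at h0 h1 h2
  rw [integral_gaussianReal_eq_integral_smul (by simp),
    integral_gaussianReal_eq_integral_smul (by simp)]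
  have := integral_mul_deriv_eq_deriv_mul_of_integrable (u := f) (v := gaussianPDFReal 0 1)
    (u' := f') (v' := fun x => -x * gaussianPDFReal 0 1 x) (fun x _ => hf x)
    (fun x _ => gauss_hasDerivAt x)
    (by
      refine h2.neg.congr (Eventually.of_forall fun x => ?_)
      simp only [Pi.neg_apply, Pi.mul_apply]; ring)
    (by
      refine h1.congr (Eventually.of_forall fun x => ?_)
      simp only [Pi.mul_apply]; ring)
    (by
      refine h0.congr (Eventually.of_forall fun x => ?_)
      simp only [Pi.mul_apply]; ring)
  have e1 : ∀ x, gaussianPDFReal 0 1 x • (x * f x) = -(f x * (-x * gaussianPDFReal 0 1 x)) := by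
    intro x; simp only [smul_eq_mul]; ring
  have e2 : ∀ x, gaussianPDFReal 0 1 x • (f' x) = f' x * gaussianPDFReal 0 1 x := by
    intro x; simp only [smul_eq_mul]; ring
  simp only [e1, e2, integral_neg, this, neg_neg]

theorem mp_update {ι : Type*} [Fintype ι] [DecidableEq ι] {α : Type*} [MeasurableSpace α]
    (ν : Measure α) [IsProbabilityMeasure ν] (i : ι) :
    MeasurePreserving (fun q : (ι → α) × α => Function.update q.1 i q.2)
      ((Measure.pi fun _ => ν).prod ν) (Measure.pi fun _ => ν) := by
  have hm : Measurable (fun q : (ι → α) × α => Function.update q.1 i q.2) := by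
    rw [measurable_pi_iff]
    intro k
    by_cases hk : k = i
    · subst hk; simpa using measurable_snd
    · simp only [Function.update_of_ne hk]
      exact (measurable_pi_apply k).comp measurable_fst
  refine ⟨hm, ?_⟩
  symm
  apply Measure.pi_eq
  intro s hs
  rw [Measure.map_apply hm (MeasurableSet.univ_pi hs)]
  have : (fun q : (ι → α) × α => Function.update q.1 i q.2) ⁻¹' (Set.univ.pi s)
      = (Set.univ.pi (Function.update s i Set.univ)) ×ˢ (s i) := by
    ext ⟨x, y⟩
    simp only [Set.mem_preimage, Set.mem_pi, Set.mem_univ, true_implies, Set.mem_prod]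
    constructor
    · intro h
      refine ⟨fun k => ?_, by simpa using h i⟩
      by_cases hk : k = i
      · subst hk; simp
      · simpa [Function.update_of_ne hk] using h k
    · rintro ⟨h, h'⟩ k
      by_cases hk : k = i
      · subst hk; simpa using h'
      · simpa [Function.update_of_ne hk] using h k
  rw [this, Measure.prod_prod, Measure.pi_pi]
  rw [← Finset.prod_erase_mul _ _ (Finset.mem_univ i)]
  rw [← Finset.prod_erase_mul _ (fun i => ν (s i)) (Finset.mem_univ i)]
  simp only [Function.update_self, measure_univ, mul_one]
  congr 1
  refine Finset.prod_congr rfl fun k hk => ?_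
  rw [Function.update_of_ne (Finset.ne_of_mem_erase hk)]

instance gaussEnsemble_prob (n p : ℕ) : IsProbabilityMeasure (gaussEnsemble n p) := by
  unfold gaussEnsemble; infer_instance

/-- elementary direction -/
def dirE {n p : ℕ} (i : Fin n) (j : Fin p) : Fin n → Fin p → ℝ := Pi.single i (Pi.single j 1)

theorem mp_update2 (n p : ℕ) (i : Fin n) (j : Fin p) :
    MeasurePreserving (fun q : ((Fin n → Fin p → ℝ) × (Fin p → ℝ)) × ℝ =>
        Function.update q.1.1 i (Function.update q.1.2 j q.2))
      (((gaussEnsemble n p).prod (Measure.pi fun _ => gaussianReal 0 1)).prod (gaussianReal 0 1))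
      (gaussEnsemble n p) := by
  have h1 := mp_update (ι := Fin p) (gaussianReal 0 1) j
  have h2 := mp_update (ι := Fin n) (Measure.pi fun _ : Fin p => gaussianReal 0 1) i
  have h3 := (MeasurePreserving.id (gaussEnsemble n p)).prod h1
  have h4 := measurePreserving_prodAssoc (gaussEnsemble n p)
    (Measure.pi fun _ : Fin p => gaussianReal 0 1) (gaussianReal 0 1)
  exact (h2.comp h3).comp h4

theorem stein_multi {n p : ℕ} (i : Fin n) (j : Fin p) (f f' : (Fin n → Fin p → ℝ) → ℝ)
    (hf : ∀ Z, HasDerivAt (fun t : ℝ => f (Z + t • dirE i j)) (f' Z) 0)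
    (h0 : Integrable f (gaussEnsemble n p)) (h1 : Integrable f' (gaussEnsemble n p))
    (h2 : Integrable (fun Z => Z i j * f Z) (gaussEnsemble n p)) :
    ∫ Z, Z i j * f Z ∂gaussEnsemble n p = ∫ Z, f' Z ∂gaussEnsemble n p := by
  have mp := mp_update2 n p i j
  have key : ∀ g : (Fin n → Fin p → ℝ) → ℝ, Integrable g (gaussEnsemble n p) →
      Integrable (fun q : ((Fin n → Fin p → ℝ) × (Fin p → ℝ)) × ℝ =>
        g (Function.update q.1.1 i (Function.update q.1.2 j q.2)))
      (((gaussEnsemble n p).prod (Measure.pi fun _ => gaussianReal 0 1)).prod (gaussianReal 0 1)) :=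
    fun g hg => mp.integrable_comp_of_integrable hg
  have key2 : ∀ g : (Fin n → Fin p → ℝ) → ℝ, Integrable g (gaussEnsemble n p) →
      ∫ Z, g Z ∂gaussEnsemble n p = ∫ q : (Fin n → Fin p → ℝ) × (Fin p → ℝ), (∫ t : ℝ,
        g (Function.update q.1 i (Function.update q.2 j t)) ∂gaussianReal 0 1)
      ∂((gaussEnsemble n p).prod (Measure.pi fun _ => gaussianReal 0 1)) := by
    intro g hg
    rw [← integral_prod _ (key g hg)]
    conv_lhs => rw [← mp.map_eq]
    rw [integral_map mp.measurable.aemeasurable]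
    rw [mp.map_eq]; exact hg.1
  rw [key2 _ h2, key2 _ h1]
  apply integral_congr_ae
  filter_upwards [(key _ h0).prod_right_ae, (key _ h1).prod_right_ae, (key _ h2).prod_right_ae]
    with q k0 k1 k2
  simp only [Function.update_self] at k2 ⊢
  refine stein_one _ _ (fun t => ?_) k0 k1 k2
  have := hf (Function.update q.1 i (Function.update q.2 j t))
  have e : ∀ u : ℝ, Function.update q.1 i (Function.update q.2 j t) + (u - t) • dirE i j
      = Function.update q.1 i (Function.update q.2 j u) := by
    intro u
    ext a b
    by_cases ha : a = i
    · subst ha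
      by_cases hb : b = j
      · subst hb; simp [dirE]
      · simp [dirE, hb]
    · simp [dirE, ha]
  have h3 : HasDerivAt (fun t_1 : ℝ => f (Function.update q.1 i (Function.update q.2 j t) + t_1 • dirE i j))
     (f' (Function.update q.1 i (Function.update q.2 j t))) (t - t) := by rw [sub_self]; exact this
  have := HasDerivAt.comp_sub_const t t h3
  simpa only [e] using this

/-! ### Spectral facts -/

def gramS {n p : ℕ} (Z : Fin n → Fin p → ℝ) : Matrix (Fin p) (Fin p) ℝ :=
  (Matrix.of Z)ᵀ * Matrix.of Z

def resR {n p : ℕ} (ε : ℝ) (Z : Fin n → Fin p → ℝ) : Matrix (Fin p) (Fin p) ℝ :=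
  (gramS Z + ε • (1 : Matrix (Fin p) (Fin p) ℝ))⁻¹

theorem gramS_posSemidef {n p : ℕ} (Z : Fin n → Fin p → ℝ) : (gramS Z).PosSemidef := by
  have := Matrix.posSemidef_conjTranspose_mul_self (Matrix.of Z)
  rwa [Matrix.conjTranspose_eq_transpose_of_trivial] at this

theorem gramS_spec {n p : ℕ} (Z : Fin n → Fin p → ℝ) : ∃ l : Fin p → ℝ, (∀ i, 0 ≤ l i) ∧
    (∀ ε : ℝ, (gramS Z + ε • (1 : Matrix (Fin p) (Fin p) ℝ)).det = ∏ i, (l i + ε)) ∧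
    (∀ ε : ℝ, (∀ i, l i + ε ≠ 0) → ∀ k : ℕ,
      Matrix.trace (resR ε Z ^ k) = ∑ i, ((l i + ε)⁻¹) ^ k) := by
  have hH := (gramS_posSemidef Z).isHermitian
  set φ := Unitary.conjStarAlgAut ℝ (Matrix (Fin p) (Fin p) ℝ) hH.eigenvectorUnitary with hφ
  have hS : gramS Z = φ (diagonal hH.eigenvalues) := by
    exact hH.spectral_theorem
  have hSe : ∀ ε : ℝ, gramS Z + ε • (1 : Matrix (Fin p) (Fin p) ℝ)
      = φ (diagonal (fun i => hH.eigenvalues i + ε)) := by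
    intro ε
    have : (diagonal (fun i => hH.eigenvalues i + ε) : Matrix (Fin p) (Fin p) ℝ)
      = diagonal hH.eigenvalues + ε • 1 := by
      rw [← diagonal_one, ← diagonal_smul, diagonal_add]
      congr 1; ext i; simp
    rw [this, map_add, map_smul, map_one, ← hS]
  have hU : star (hH.eigenvectorUnitary : Matrix (Fin p) (Fin p) ℝ) * hH.eigenvectorUnitary = 1 :=
    Unitary.coe_star_mul_self _
  refine ⟨hH.eigenvalues, fun i => (gramS_posSemidef Z).eigenvalues_nonneg i, ?_, ?_⟩
  · intro ε
    rw [hSe, hφ, Unitary.conjStarAlgAut_apply, det_mul, det_mul, mul_right_comm, mul_comm (det _) (det _),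
      ← det_mul, mul_comm]
    rw [hU]
    simp
  · intro ε hε k
    have : resR ε Z = φ (diagonal (fun i => (hH.eigenvalues i + ε)⁻¹)) := by
      unfold resR
      apply inv_eq_right_inv
      rw [hSe, ← map_mul, diagonal_mul_diagonal]
      simp [mul_inv_cancel₀ (hε _)]
    rw [this, ← map_pow, diagonal_pow, hφ, Unitary.conjStarAlgAut_apply, trace_mul_comm, ← mul_assoc,
      hU, one_mul, trace_diagonal]
    rfl

section helpers

variable {n p : ℕ}

theorem res_mul {ε : ℝ} (hε : 0 < ε) (Z : Fin n → Fin p → ℝ) :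
    IsUnit (gramS Z + ε • (1 : Matrix (Fin p) (Fin p) ℝ)).det := by
  obtain ⟨l, h0, hd, -⟩ := gramS_spec Z
  rw [hd, isUnit_iff_ne_zero, Finset.prod_ne_zero_iff]
  intro i _
  have := h0 i
  positivity

theorem resR_isSymm (ε : ℝ) (Z : Fin n → Fin p → ℝ) : (resR ε Z)ᵀ = resR ε Z := by
  unfold resR gramS
  rw [transpose_nonsing_inv]
  simp [transpose_add, transpose_mul, transpose_smul]

theorem resR_pow_isSymm (ε : ℝ) (Z : Fin n → Fin p → ℝ) (k : ℕ) : (resR ε Z ^ k)ᵀ = resR ε Z ^ k := by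
  rw [transpose_pow, resR_isSymm]

theorem S_mul_resR {ε : ℝ} (hε : 0 < ε) (Z : Fin n → Fin p → ℝ) :
    gramS Z * resR ε Z = 1 - ε • resR ε Z := by
  have := mul_nonsing_inv _ (res_mul hε Z)
  rw [add_mul] at this
  rw [eq_sub_iff_add_eq, ← this]
  simp [resR]

theorem resR_mul_S {ε : ℝ} (hε : 0 < ε) (Z : Fin n → Fin p → ℝ) :
    resR ε Z * gramS Z = 1 - ε • resR ε Z := by
  have := nonsing_inv_mul _ (res_mul hε Z)
  rw [mul_add] at this
  rw [eq_sub_iff_add_eq, ← this]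
  simp [resR]

theorem tr_nonneg {ε : ℝ} (hε : 0 < ε) (Z : Fin n → Fin p → ℝ) (k : ℕ) :
    0 ≤ trace (resR ε Z ^ k) := by
  obtain ⟨l, h0, -, ht⟩ := gramS_spec Z
  have hp : ∀ i, 0 < l i + ε := fun i => by have := h0 i; positivity
  rw [ht ε (fun i => (hp i).ne') k]
  exact Finset.sum_nonneg fun i _ => pow_nonneg (inv_nonneg.2 (hp i).le) _

theorem tr_cheb {ε : ℝ} (hε : 0 < ε) (Z : Fin n → Fin p → ℝ) (a b : ℕ) :
    trace (resR ε Z ^ a) * trace (resR ε Z ^ b) ≤ p * trace (resR ε Z ^ (a + b)) := by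
  obtain ⟨l, h0, -, ht⟩ := gramS_spec Z
  have hp : ∀ i, 0 < l i + ε := fun i => by have := h0 i; positivity
  rw [ht ε (fun i => (hp i).ne'), ht ε (fun i => (hp i).ne'), ht ε (fun i => (hp i).ne')]
  have hq : ∀ i, 0 ≤ (l i + ε)⁻¹ := fun i => inv_nonneg.2 (hp i).le
  have hm : Monovary (fun i => ((l i + ε)⁻¹) ^ a) (fun i => ((l i + ε)⁻¹) ^ b) := by
    intro i j hij
    have := lt_of_pow_lt_pow_left₀ b (hq j) hij
    exact pow_le_pow_left₀ (hq i) this.le a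
  have := hm.sum_mul_sum_le_card_mul_sum
  simpa [pow_add] using this

theorem sum_pow_le' {ι : Type*} [Fintype ι] (x : ι → ℝ) (hx : ∀ i, 0 ≤ x i) (k : ℕ) :
    ∑ i, x i ^ (k + 1) ≤ (∑ i, x i) ^ (k + 1) := by
  rw [pow_succ, Finset.mul_sum]
  refine Finset.sum_le_sum fun i _ => ?_
  rw [pow_succ]
  gcongr
  · exact hx i
  · exact hx i
  · exact Finset.single_le_sum (fun j _ => hx j) (Finset.mem_univ i)

theorem tr_pow_le {ε : ℝ} (hε : 0 < ε) (Z : Fin n → Fin p → ℝ) (k : ℕ) :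
    trace (resR ε Z ^ (k + 1)) ≤ trace (resR ε Z) ^ (k + 1) := by
  obtain ⟨l, h0, -, ht⟩ := gramS_spec Z
  have hp : ∀ i, 0 < l i + ε := fun i => by have := h0 i; positivity
  have h1 := ht ε (fun i => (hp i).ne') 1
  rw [pow_one] at h1
  rw [ht ε (fun i => (hp i).ne'), h1]
  simp only [pow_one]
  exact sum_pow_le' _ (fun i => inv_nonneg.2 (hp i).le) k

theorem tr_bound {ε : ℝ} (hε : 0 < ε) (Z : Fin n → Fin p → ℝ) (k : ℕ) :
    trace (resR ε Z ^ k) ≤ p * (ε⁻¹) ^ k := by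
  obtain ⟨l, h0, -, ht⟩ := gramS_spec Z
  have hp : ∀ i, 0 < l i + ε := fun i => by have := h0 i; positivity
  rw [ht ε (fun i => (hp i).ne')]
  calc _ ≤ ∑ i : Fin p, (ε⁻¹) ^ k := by
        refine Finset.sum_le_sum fun i _ => ?_
        have := h0 i
        have := hp i
        gcongr
        linarith
    _ = _ := by simp

theorem entry_bound {ε : ℝ} (hε : 0 < ε) (Z : Fin n → Fin p → ℝ) (a b : Fin p) :
    |resR ε Z a b| ≤ p * ε⁻¹ + 1 := by
  have h1 : (resR ε Z a b) ^ 2 ≤ trace (resR ε Z ^ 2) := by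
    have : trace (resR ε Z ^ 2) = ∑ a, ∑ b, (resR ε Z a b) ^ 2 := by
      conv_lhs => rw [pow_two]; arg 1; arg 1; rw [← resR_isSymm]
      simp only [trace, diag_apply, mul_apply, transpose_apply, pow_two]
      exact Finset.sum_comm
    rw [this]
    calc _ ≤ ∑ b, (resR ε Z a b) ^ 2 :=
          Finset.single_le_sum (f := fun b => (resR ε Z a b) ^ 2) (fun j _ => sq_nonneg _) (Finset.mem_univ b)
      _ ≤ _ := Finset.single_le_sum (f := fun a => ∑ b, (resR ε Z a b) ^ 2)
        (fun j _ => Finset.sum_nonneg fun j _ => sq_nonneg _) (Finset.mem_univ a)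
  have h2 := tr_bound hε Z 2
  have hp : 1 ≤ p := by have := a.2; omega
  have hp' : (1 : ℝ) ≤ p := by exact_mod_cast hp
  have he : 0 < ε⁻¹ := inv_pos.2 hε
  apply abs_le_of_sq_le_sq _ (by positivity)
  nlinarith [mul_pos (show (0 : ℝ) < p by linarith) he, sq_nonneg (ε⁻¹), mul_nonneg (sub_nonneg.2 hp') (mul_nonneg (show (0:ℝ) ≤ p by linarith) (sq_nonneg ε⁻¹))]

/-! ### Derivatives and the matrix Stein identity -/

open scoped Matrix.Norms.Operator

def qf (Z : Fin n → Fin p → ℝ) : ℝ := 1 + ∑ i, ∑ j, |Z i j|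

theorem one_le_qf (Z : Fin n → Fin p → ℝ) : 1 ≤ qf Z := by
  unfold qf
  have : 0 ≤ ∑ i, ∑ j, |Z i j| := Finset.sum_nonneg fun _ _ => Finset.sum_nonneg fun _ _ => abs_nonneg _
  linarith

theorem norm_le_sum {m k : ℕ} (A : Matrix (Fin m) (Fin k) ℝ) : ‖A‖ ≤ ∑ i, ∑ j, |A i j| := by
  have hnn : ∀ i, 0 ≤ ∑ j, |A i j| := fun i => Finset.sum_nonneg fun _ _ => abs_nonneg _
  rw [linfty_opNorm_def]
  have : (Finset.univ.sup fun i => ∑ j, ‖A i j‖₊) ≤ ∑ i, ∑ j, ‖A i j‖₊ := by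
    apply Finset.sup_le
    intro i _
    exact Finset.single_le_sum (f := fun i => ∑ j, ‖A i j‖₊) (fun _ _ => zero_le) (Finset.mem_univ i)
  have := NNReal.coe_le_coe.2 this
  simpa using this

theorem entry_le_norm {m k : ℕ} (A : Matrix (Fin m) (Fin k) ℝ) (i : Fin m) (j : Fin k) :
    |A i j| ≤ ‖A‖ := by
  rw [linfty_opNorm_def]
  have h1 : ‖A i j‖₊ ≤ ∑ j, ‖A i j‖₊ :=
    Finset.single_le_sum (f := fun j => ‖A i j‖₊) (fun _ _ => zero_le) (Finset.mem_univ j)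
  have h2 := Finset.le_sup (f := fun i => ∑ j, ‖A i j‖₊) (Finset.mem_univ i)
  have := NNReal.coe_le_coe.2 (h1.trans h2)
  simpa using this

theorem norm_of_le (Z : Fin n → Fin p → ℝ) : ‖Matrix.of Z‖ ≤ qf Z := by
  refine (norm_le_sum _).trans ?_
  simp [qf]

theorem norm_of_transpose_le (Z : Fin n → Fin p → ℝ) : ‖(Matrix.of Z)ᵀ‖ ≤ qf Z := by
  refine (norm_le_sum _).trans ?_
  rw [Finset.sum_comm]
  simp [qf]

theorem integrable_qf_sq : Integrable (fun Z : Fin n → Fin p → ℝ => qf Z ^ 2) (gaussEnsemble n p) := by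
  have : MemLp (fun Z : Fin n → Fin p → ℝ => qf Z) 2 (gaussEnsemble n p) := by
    have h0 : MemLp (fun _ : Fin n → Fin p → ℝ => (1 : ℝ)) 2 (gaussEnsemble n p) := memLp_const 1
    have hs : MemLp (fun Z : Fin n → Fin p → ℝ => ∑ i, ∑ j, |Z i j|) 2 (gaussEnsemble n p) := by
     refine memLp_finsetSum _ fun i _ => memLp_finsetSum _ fun j _ => ?_
     have h1 : MeasurePreserving (fun Z : Fin n → Fin p → ℝ => Z i j) (gaussEnsemble n p)
         (gaussianReal 0 1) :=
       (measurePreserving_eval (fun _ : Fin p => gaussianReal 0 1) j).comp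
         (measurePreserving_eval (fun _ : Fin n => Measure.pi fun _ : Fin p => gaussianReal 0 1) i)
     have h2 := (memLp_id_gaussianReal' (μ := 0) (v := 1) 2 (by simp)).comp_measurePreserving h1
     exact h2.norm
    exact h0.add hs
  exact this.integrable_sq

theorem integrable_of_le_qf {f : (Fin n → Fin p → ℝ) → ℝ} (hc : Continuous f) (C : ℝ)
    (h : ∀ Z, |f Z| ≤ C * qf Z ^ 2) : Integrable f (gaussEnsemble n p) :=
  (integrable_qf_sq.const_mul C).mono' hc.aestronglyMeasurable (Eventually.of_forall h)

theorem dirE_mul (i : Fin n) (j : Fin p) (A : Matrix (Fin p) (Fin p) ℝ) :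
    (Matrix.of (dirE i j) * A) i j = A j j := by
  simp [mul_apply, dirE, Pi.single_apply]

theorem stein_matrix (G : (Fin n → Fin p → ℝ) → Matrix (Fin p) (Fin p) ℝ)
    (G' : Fin n → Fin p → (Fin n → Fin p → ℝ) → Matrix (Fin p) (Fin p) ℝ)
    (hd : ∀ i j Z, HasDerivAt (fun t : ℝ => G (Z + t • dirE i j)) (G' i j Z) 0)
    (hG : Continuous G) (hG' : ∀ i j, Continuous (G' i j)) (C : ℝ)
    (hb : ∀ Z, ‖G Z‖ ≤ C) (hb' : ∀ i j Z, ‖G' i j Z‖ ≤ C * qf Z) :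
    Integrable (fun Z => trace (gramS Z * G Z)) (gaussEnsemble n p) ∧
    Integrable (fun Z => n * trace (G Z) + ∑ i, ∑ j, (Matrix.of Z * G' i j Z) i j)
      (gaussEnsemble n p) ∧
    ∫ Z, trace (gramS Z * G Z) ∂gaussEnsemble n p =
      ∫ Z, (n * trace (G Z) + ∑ i, ∑ j, (Matrix.of Z * G' i j Z) i j) ∂gaussEnsemble n p := by
  have hof : Continuous (fun Z : Fin n → Fin p → ℝ => Matrix.of Z) := continuous_id
  have hC : 0 ≤ C := (norm_nonneg _).trans (hb 0)
  have hfb : ∀ i j Z, |(Matrix.of Z * G Z) i j| ≤ C * qf Z := by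
    intro i j Z
    calc _ ≤ ‖Matrix.of Z * G Z‖ := entry_le_norm _ _ _
      _ ≤ ‖Matrix.of Z‖ * ‖G Z‖ := linfty_opNorm_mul _ _
      _ ≤ qf Z * C := by
        gcongr
        · exact zero_le_one.trans (one_le_qf Z)
        · exact norm_of_le Z
        · exact hb Z
      _ = _ := mul_comm _ _
  have hZ : ∀ i j (Z : Fin n → Fin p → ℝ), |Z i j| ≤ qf Z := fun i j Z =>
    (entry_le_norm (Matrix.of Z) i j).trans (norm_of_le Z)
  have hq0 : ∀ Z : Fin n → Fin p → ℝ, 0 ≤ qf Z := fun Z => zero_le_one.trans (one_le_qf Z)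
  have hcf : ∀ i j, Continuous (fun Z => (Matrix.of Z * G Z) i j) := fun i j =>
    (hof.matrix_mul hG).matrix_elem i j
  have h0 : ∀ i j, Integrable (fun Z => (Matrix.of Z * G Z) i j) (gaussEnsemble n p) := by
    intro i j
    refine integrable_of_le_qf (hcf i j) C fun Z => (hfb i j Z).trans ?_
    have := one_le_qf Z
    gcongr
    nlinarith
  have h1 : ∀ i j, Integrable (fun Z => G Z j j + (Matrix.of Z * G' i j Z) i j) (gaussEnsemble n p) := by
    intro i j
    refine integrable_of_le_qf ((hG.matrix_elem j j).add ((hof.matrix_mul (hG' i j)).matrix_elem i j))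
      (C + C) fun Z => ?_
    have a1 : |G Z j j| ≤ C := (entry_le_norm _ _ _).trans (hb Z)
    have a2 : |(Matrix.of Z * G' i j Z) i j| ≤ qf Z * (C * qf Z) := by
      calc _ ≤ ‖Matrix.of Z * G' i j Z‖ := entry_le_norm _ _ _
        _ ≤ ‖Matrix.of Z‖ * ‖G' i j Z‖ := linfty_opNorm_mul _ _
        _ ≤ _ := by
          gcongr
          · exact hq0 Z
          · exact norm_of_le Z
          · exact hb' i j Z
    refine (abs_add_le _ _).trans ?_
    have a3 : C ≤ C * qf Z ^ 2 := by
      have := one_le_qf Z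
      nlinarith [mul_nonneg hC (sub_nonneg.2 this)]
    nlinarith
  have h2 : ∀ i j, Integrable (fun Z => Z i j * (Matrix.of Z * G Z) i j) (gaussEnsemble n p) := by
    intro i j
    have hc : Continuous (fun Z : Fin n → Fin p → ℝ => Z i j) := by fun_prop
    refine integrable_of_le_qf (hc.mul (hcf i j)) C fun Z => ?_
    rw [abs_mul]
    calc _ ≤ qf Z * (C * qf Z) := by
          gcongr
          · exact hq0 Z
          · exact hZ i j Z
          · exact hfb i j Z
      _ = _ := by ring
  have e1 : ∀ Z, trace (gramS Z * G Z) = ∑ i, ∑ j, Z i j * (Matrix.of Z * G Z) i j := by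
    intro Z
    rw [gramS, Matrix.mul_assoc]
    simp only [trace, diag_apply]
    rw [Finset.sum_comm]
    refine Finset.sum_congr rfl fun j _ => ?_
    rw [mul_apply]
    rfl
  have e2 : ∀ Z, n * trace (G Z) + ∑ i, ∑ j, (Matrix.of Z * G' i j Z) i j
      = ∑ i, ∑ j, (G Z j j + (Matrix.of Z * G' i j Z) i j) := by
    intro Z
    simp only [Finset.sum_add_distrib]
    simp [trace]
  have e3 : ∀ i j, ∫ Z, Z i j * (Matrix.of Z * G Z) i j ∂gaussEnsemble n p
      = ∫ Z, (G Z j j + (Matrix.of Z * G' i j Z) i j) ∂gaussEnsemble n p := by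
    intro i j
    refine stein_multi i j (fun Z => (Matrix.of Z * G Z) i j) _ (fun Z => ?_) (h0 i j) (h1 i j) (h2 i j)
    have d1 : ∀ k, HasDerivAt (fun t : ℝ => Z i k + t * dirE i j i k) (dirE i j i k) 0 := by
      intro k
      simpa using ((hasDerivAt_id (0 : ℝ)).mul_const (dirE i j i k)).const_add (Z i k)
    have d2 : ∀ k, HasDerivAt (fun t : ℝ => G (Z + t • dirE i j) k j) (G' i j Z k j) 0 := by
      intro k
      exact hasDerivAt_pi.1 (hasDerivAt_pi.1 (hd i j Z) k) j
    have d3 := HasDerivAt.fun_sum (u := Finset.univ) fun k _ => (d1 k).mul (d2 k)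
    have d4 : HasDerivAt (fun t : ℝ => (Matrix.of (Z + t • dirE i j) * G (Z + t • dirE i j)) i j)
      (∑ k, (dirE i j i k * G (Z + (0:ℝ) • dirE i j) k j + (Z i k + 0 * dirE i j i k) * G' i j Z k j)) 0 := d3
    refine d4.congr_deriv ?_
    rw [Finset.sum_add_distrib]
    congr 1
    · have := dirE_mul i j (G Z)
      rw [mul_apply] at this
      simpa using this
    · rw [mul_apply]; simp
  simp only [e1, e2]
  refine ⟨integrable_finsetSum _ fun i _ => integrable_finsetSum _ fun j _ => h2 i j,
    integrable_finsetSum _ fun i _ => integrable_finsetSum _ fun j _ => h1 i j, ?_⟩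
  rw [integral_finsetSum _ fun i _ => integrable_finsetSum _ fun j _ => h2 i j,
    integral_finsetSum _ fun i _ => integrable_finsetSum _ fun j _ => h1 i j]
  refine Finset.sum_congr rfl fun i _ => ?_
  rw [integral_finsetSum _ fun j _ => h2 i j, integral_finsetSum _ fun j _ => h1 i j]
  exact Finset.sum_congr rfl fun j _ => e3 i j

/-- derivative of the Gram matrix -/
def gramE (i : Fin n) (j : Fin p) (Z : Fin n → Fin p → ℝ) : Matrix (Fin p) (Fin p) ℝ :=
  (Matrix.of (dirE i j))ᵀ * Matrix.of Z + (Matrix.of Z)ᵀ * Matrix.of (dirE i j)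

theorem hasDerivAt_gram (i : Fin n) (j : Fin p) (Z : Fin n → Fin p → ℝ) :
    HasDerivAt (fun t : ℝ => gramS (Z + t • dirE i j)) (gramE i j Z) 0 := by
  have : ∀ t : ℝ, gramS (Z + t • dirE i j) = gramS Z + t • gramE i j Z
      + t ^ 2 • ((Matrix.of (dirE i j))ᵀ * Matrix.of (dirE i j)) := by
    intro t
    have e : Matrix.of (Z + t • dirE i j) = Matrix.of Z + t • Matrix.of (dirE i j) := rfl
    simp only [gramS, gramE, e, transpose_add, transpose_smul, Matrix.add_mul, Matrix.mul_add, Matrix.smul_mul, Matrix.mul_smul,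
      smul_add, pow_two, smul_smul]
    abel
  simp only [this]
  have h1 := ((hasDerivAt_id (0 : ℝ)).smul_const (gramE i j Z)).const_add (gramS Z)
  have h2 := ((hasDerivAt_id (0 : ℝ)).pow 2).smul_const
    ((Matrix.of (dirE i j))ᵀ * Matrix.of (dirE i j))
  refine (h1.add h2).congr_deriv ?_
  simp

theorem hasDerivAt_res {ε : ℝ} (hε : 0 < ε) (i : Fin n) (j : Fin p) (Z : Fin n → Fin p → ℝ) :
    HasDerivAt (fun t : ℝ => resR ε (Z + t • dirE i j)) (-(resR ε Z * gramE i j Z * resR ε Z)) 0 := by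
  have hu := (isUnit_iff_isUnit_det _).2 (res_mul hε Z)
  have h1 := (hasDerivAt_gram i j Z).add_const (ε • (1 : Matrix (Fin p) (Fin p) ℝ))
  have h2 := hasFDerivAt_ringInverse (𝕜 := ℝ) hu.unit
  have h3 : HasFDerivAt Ring.inverse
      (-ContinuousLinearMap.mulLeftRight ℝ (Matrix (Fin p) (Fin p) ℝ) ↑(hu.unit⁻¹) ↑(hu.unit⁻¹))
      (gramS (Z + (0 : ℝ) • dirE i j) + ε • (1 : Matrix (Fin p) (Fin p) ℝ)) := by
    simpa using h2
  have h4 := h3.comp_hasDerivAt (0 : ℝ) h1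
  have e : (↑(hu.unit⁻¹) : Matrix (Fin p) (Fin p) ℝ) = resR ε Z := by
    rw [resR, nonsing_inv_eq_ringInverse, ← Ring.inverse_unit]
    rfl
  rw [e] at h4
  simp only [resR, nonsing_inv_eq_ringInverse] at h4 ⊢
  simpa using! h4

theorem hasDerivAt_res_pow {ε : ℝ} (hε : 0 < ε) (i : Fin n) (j : Fin p) (Z : Fin n → Fin p → ℝ) (k : ℕ) :
    HasDerivAt (fun t : ℝ => resR ε (Z + t • dirE i j) ^ k)
      (-∑ m ∈ Finset.range k, resR ε Z ^ (m + 1) * gramE i j Z * resR ε Z ^ (k - m)) 0 := by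
  induction k with
  | zero =>
    simp only [pow_zero, Finset.range_zero, Finset.sum_empty, neg_zero]
    exact hasDerivAt_const (0 : ℝ) (1 : Matrix (Fin p) (Fin p) ℝ)
  | succ k ih =>
    simp only [pow_succ _ k]
    refine (ih.mul (hasDerivAt_res hε i j Z)).congr_deriv ?_
    rw [Finset.sum_range_succ]
    simp only [zero_smul, add_zero, neg_mul, Finset.sum_mul, mul_neg, neg_add]
    congr 2
    · refine Finset.sum_congr rfl fun m hm => ?_
      have : k + 1 - m = (k - m) + 1 := by have := Finset.mem_range.1 hm; omega
      rw [this, pow_succ _ (k - m)]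
      simp only [mul_assoc]
    · rw [show k + 1 - k = 1 by omega, pow_one, pow_succ]
      simp only [mul_assoc]

theorem continuous_gram : Continuous (fun Z : Fin n → Fin p → ℝ => gramS Z) := by
  have hof : Continuous (fun Z : Fin n → Fin p → ℝ => Matrix.of Z) := continuous_id
  exact hof.matrix_transpose.matrix_mul hof

theorem continuous_gramE (i : Fin n) (j : Fin p) : Continuous (gramE i j) := by
  have hof : Continuous (fun Z : Fin n → Fin p → ℝ => Matrix.of Z) := continuous_id
  exact (continuous_const.matrix_mul hof).add (hof.matrix_transpose.matrix_mul continuous_const)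

theorem continuous_res {ε : ℝ} (hε : 0 < ε) : Continuous (fun Z : Fin n → Fin p → ℝ => resR ε Z) := by
  rw [continuous_iff_continuousAt]
  intro Z
  have hu := (isUnit_iff_isUnit_det _).2 (res_mul hε Z)
  have h2 := NormedRing.inverse_continuousAt hu.unit
  rw [IsUnit.unit_spec] at h2
  simp only [resR, nonsing_inv_eq_ringInverse]
  exact ContinuousAt.comp (f := fun Z : Fin n → Fin p → ℝ => gramS Z + ε • (1 : Matrix (Fin p) (Fin p) ℝ)) h2
    (continuous_gram.add continuous_const).continuousAt

/-! ### The two moment inequalities for the regularised resolvent -/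

theorem tr_transpose_mul {m k : ℕ} (A B : Matrix (Fin m) (Fin k) ℝ) :
    ∑ i, ∑ j, A i j * B i j = trace (Aᵀ * B) := by
  simp only [trace, diag_apply, mul_apply, transpose_apply]
  exact Finset.sum_comm

theorem tr_dirE (i : Fin n) (j : Fin p) (B : Matrix (Fin n) (Fin p) ℝ) :
    trace ((Matrix.of (dirE i j))ᵀ * B) = B i j := by
  rw [← tr_transpose_mul]
  have : ∀ a b, (Matrix.of (dirE i j)) a b = if a = i then (if b = j then 1 else 0) else (0 : ℝ) := by
    intro a b
    by_cases ha : a = i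
    · subst ha; simp [dirE, Pi.single_apply]
    · simp [dirE, ha]
  simp [this, ite_mul]

theorem sum_E (Z : Fin n → Fin p → ℝ) (A B : Matrix (Fin p) (Fin p) ℝ) :
    ∑ i, ∑ j, (Matrix.of Z * (A * gramE i j Z * B)) i j
      = trace (Aᵀ * gramS Z * B) + trace (A * gramS Z) * trace B := by
  have h : ∀ i j, (Matrix.of Z * (A * gramE i j Z * B)) i j
      = (Matrix.of Z * A) i j * (Matrix.of Z * B) i j
        + (Matrix.of Z * A * (Matrix.of Z)ᵀ) i i * B j j := by
    intro i j
    have e1 : Matrix.of Z * (A * gramE i j Z * B)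
        = (Matrix.of Z * A) * ((Matrix.of (dirE i j))ᵀ * (Matrix.of Z * B))
          + (Matrix.of Z * A * (Matrix.of Z)ᵀ) * (Matrix.of (dirE i j) * B) := by
      simp only [gramE, Matrix.mul_add, Matrix.add_mul, Matrix.mul_assoc]
    have h1 : ∀ (M : Matrix (Fin n) (Fin p) ℝ) (N : Matrix (Fin n) (Fin p) ℝ),
        (M * ((Matrix.of (dirE i j))ᵀ * N)) i j = M i j * N i j := by
      intro M N
      simp [mul_apply, dirE, Pi.single_apply]
      rw [Finset.sum_eq_single j]
      · rw [Finset.sum_eq_single i]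
        · simp
        · intro b _ hb; simp [hb]
        · simp
      · intro b _ hb
        rw [Finset.sum_eq_zero, mul_zero]
        intro c _
        by_cases hc : c = i
        · subst hc; simp [hb]
        · simp [hc]
      · simp
    have h2 : ∀ (M : Matrix (Fin n) (Fin n) ℝ) (N : Matrix (Fin p) (Fin p) ℝ),
        (M * (Matrix.of (dirE i j) * N)) i j = M i i * N j j := by
      intro M N
      rw [mul_apply, Finset.sum_eq_single i]
      · rw [dirE_mul]
      · intro b _ hb
        simp [mul_apply, dirE, hb]
      · simp
    rw [e1, Matrix.add_apply, h1, h2]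
  simp only [h, Finset.sum_add_distrib]
  rw [tr_transpose_mul]
  congr 1
  · rw [transpose_mul, gramS]; simp only [Matrix.mul_assoc]
  · simp only [← Finset.mul_sum, ← Finset.sum_mul]
    have : trace (A * gramS Z) = trace (Matrix.of Z * A * (Matrix.of Z)ᵀ) := by
      rw [gramS, ← Matrix.mul_assoc, trace_mul_comm, ← Matrix.mul_assoc]
    rw [this]
    rfl

theorem pow_mul_S {ε : ℝ} (hε : 0 < ε) (Z : Fin n → Fin p → ℝ) (m : ℕ) :
    resR ε Z ^ (m + 1) * gramS Z = resR ε Z ^ m - ε • resR ε Z ^ (m + 1) := by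
  rw [pow_succ, mul_assoc, resR_mul_S hε, mul_sub, mul_one, mul_smul_comm]

theorem tr_pow_S_le {ε : ℝ} (hε : 0 < ε) (Z : Fin n → Fin p → ℝ) (m : ℕ) :
    trace (resR ε Z ^ (m + 1) * gramS Z) ≤ trace (resR ε Z ^ m) := by
  rw [pow_mul_S hε, trace_sub, trace_smul, smul_eq_mul]
  have := mul_nonneg hε.le (tr_nonneg hε Z (m + 1))
  linarith

theorem tr_pow_S_pow_le {ε : ℝ} (hε : 0 < ε) (Z : Fin n → Fin p → ℝ) (m l : ℕ) :
    trace (resR ε Z ^ (m + 1) * gramS Z * resR ε Z ^ l) ≤ trace (resR ε Z ^ (m + l)) := by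
  rw [pow_mul_S hε, sub_mul, smul_mul_assoc, ← pow_add, ← pow_add, trace_sub, trace_smul, smul_eq_mul]
  have := mul_nonneg hε.le (tr_nonneg hε Z (m + 1 + l))
  linarith

theorem qf_dirE (i : Fin n) (j : Fin p) : qf (dirE i j) = 2 := by
  have h : ∀ a b, |dirE i j a b| = if a = i then (if b = j then 1 else 0) else (0 : ℝ) := by
    intro a b
    by_cases ha : a = i
    · subst ha
      by_cases hb : b = j
      · subst hb; simp [dirE]
      · simp [dirE, hb]
    · simp [dirE, ha]
  simp only [qf, h]
  simp
  norm_num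

theorem norm_gramE_le (i : Fin n) (j : Fin p) (Z : Fin n → Fin p → ℝ) : ‖gramE i j Z‖ ≤ 4 * qf Z := by
  have hq : 0 ≤ qf Z := zero_le_one.trans (one_le_qf Z)
  unfold gramE
  refine (norm_add_le _ _).trans ?_
  have h1 : ‖(Matrix.of (dirE i j))ᵀ * Matrix.of Z‖ ≤ 2 * qf Z := by
    refine (linfty_opNorm_mul _ _).trans ?_
    have := norm_of_transpose_le (dirE i j)
    rw [qf_dirE] at this
    exact mul_le_mul this (norm_of_le Z) (norm_nonneg _) (by norm_num)
  have h2 : ‖(Matrix.of Z)ᵀ * Matrix.of (dirE i j)‖ ≤ qf Z * 2 := by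
    refine (linfty_opNorm_mul _ _).trans ?_
    have := norm_of_le (dirE i j)
    rw [qf_dirE] at this
    exact mul_le_mul (norm_of_transpose_le Z) this (norm_nonneg _) hq
  linarith

theorem norm_res_le {ε : ℝ} (hε : 0 < ε) : ∃ K : ℝ, 0 ≤ K ∧ ∀ Z : Fin n → Fin p → ℝ, ‖resR ε Z‖ ≤ K := by
  have he : 0 < ε⁻¹ := inv_pos.2 hε
  refine ⟨∑ _a : Fin p, ∑ _b : Fin p, (p * ε⁻¹ + 1), by positivity, fun Z => ?_⟩
  exact (norm_le_sum _).trans (Finset.sum_le_sum fun a _ => Finset.sum_le_sum fun b _ => entry_bound hε Z a b)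

theorem norm_AEB {K : ℝ} (hK : 0 ≤ K) (i : Fin n) (j : Fin p) (Z : Fin n → Fin p → ℝ)
    (A B : Matrix (Fin p) (Fin p) ℝ) {a b : ℕ} (hA : ‖A‖ ≤ K ^ a) (hB : ‖B‖ ≤ K ^ b) :
    ‖A * gramE i j Z * B‖ ≤ 4 * K ^ (a + b) * qf Z := by
  have hq : 0 ≤ qf Z := zero_le_one.trans (one_le_qf Z)
  calc _ ≤ ‖A‖ * ‖gramE i j Z‖ * ‖B‖ :=
        (norm_mul_le _ _).trans (mul_le_mul_of_nonneg_right (norm_mul_le _ _) (norm_nonneg _))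
    _ ≤ K ^ a * (4 * qf Z) * K ^ b := by
        gcongr
        exact norm_gramE_le i j Z
    _ = _ := by rw [pow_add]; ring

theorem integrable_tr_pow {ε : ℝ} (hε : 0 < ε) (k : ℕ) :
    Integrable (fun Z : Fin n → Fin p → ℝ => trace (resR ε Z ^ k)) (gaussEnsemble n p) := by
  refine integrable_of_le_qf ((continuous_res hε).pow k).matrix_trace (p * ε⁻¹ ^ k) fun Z => ?_
  rw [abs_of_nonneg (tr_nonneg hε Z k)]
  refine (tr_bound hε Z k).trans ?_
  have he : 0 < ε⁻¹ := inv_pos.2 hε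
  have : 1 ≤ qf Z ^ 2 := one_le_pow₀ (one_le_qf Z)
  exact le_mul_of_one_le_right (by positivity) this

theorem integrable_T_pow {ε : ℝ} (hε : 0 < ε) (k : ℕ) :
    Integrable (fun Z : Fin n → Fin p → ℝ => trace (resR ε Z) ^ k) (gaussEnsemble n p) := by
  refine integrable_of_le_qf ((continuous_res hε).matrix_trace.pow k) ((p * ε⁻¹) ^ k) fun Z => ?_
  have h0 := tr_nonneg hε Z 1
  have h1 := tr_bound hε Z 1
  rw [pow_one] at h0 h1
  rw [pow_one] at h1
  rw [abs_of_nonneg (pow_nonneg h0 k)]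
  refine (pow_le_pow_left₀ h0 h1 k).trans ?_
  have he : 0 < ε⁻¹ := inv_pos.2 hε
  have : 1 ≤ qf Z ^ 2 := one_le_pow₀ (one_le_qf Z)
  exact le_mul_of_one_le_right (by positivity) this

theorem ineqA {ε : ℝ} (hε : 0 < ε) (k : ℕ) :
    ((n : ℝ) - (p + 1) * (k + 1)) * ∫ Z, trace (resR ε Z ^ (k + 1)) ∂gaussEnsemble n p
      ≤ ∫ Z, trace (resR ε Z ^ k) ∂gaussEnsemble n p := by
  obtain ⟨K, hK, hR⟩ := norm_res_le (n := n) (p := p) hε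
  have hRp : ∀ (Z : Fin n → Fin p → ℝ) m, 0 < m → ‖resR ε Z ^ m‖ ≤ K ^ m := fun Z m hm =>
    (norm_pow_le' _ hm).trans (pow_le_pow_left₀ (norm_nonneg _) (hR Z) m)
  have hres := continuous_res (n := n) (p := p) hε
  obtain ⟨i1, i2, heq⟩ := stein_matrix (n := n) (p := p) (fun Z => resR ε Z ^ (k + 1))
    (fun i j Z => -∑ m ∈ Finset.range (k + 1), resR ε Z ^ (m + 1) * gramE i j Z * resR ε Z ^ (k + 1 - m))
    (fun i j Z => hasDerivAt_res_pow hε i j Z (k + 1)) (hres.pow _)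
    (fun i j => (continuous_finsetSum _ fun m _ =>
      ((hres.pow _).mul (continuous_gramE i j)).mul (hres.pow _)).neg)
    (K ^ (k + 1) + (k + 1) * (4 * K ^ (k + 2)))
    (fun Z => (hRp Z _ (Nat.succ_pos k)).trans (le_add_of_nonneg_right (by positivity)))
    (fun i j Z => by
      have hq : 0 ≤ qf Z := zero_le_one.trans (one_le_qf Z)
      rw [norm_neg]
      refine (norm_sum_le _ _).trans ?_
      calc _ ≤ ∑ m ∈ Finset.range (k + 1), 4 * K ^ (k + 2) * qf Z := by
            refine Finset.sum_le_sum fun m hm => ?_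
            have hm' := Finset.mem_range.1 hm
            have := norm_AEB hK i j Z _ _ (hRp Z (m + 1) (by omega)) (hRp Z (k + 1 - m) (by omega))
            rwa [show m + 1 + (k + 1 - m) = k + 2 by omega] at this
        _ = (k + 1) * (4 * K ^ (k + 2)) * qf Z := by simp; ring
        _ ≤ _ := by
            gcongr
            exact le_add_of_nonneg_left (by positivity))
  have hl : ∫ Z, trace (gramS Z * resR ε Z ^ (k + 1)) ∂gaussEnsemble n p
      ≤ ∫ Z, trace (resR ε Z ^ k) ∂gaussEnsemble n p := by
    refine integral_mono i1 (integrable_tr_pow hε k) fun Z => ?_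
    simp only
    rw [trace_mul_comm]
    exact tr_pow_S_le hε Z k
  refine le_trans ?_ hl
  rw [heq, ← integral_const_mul]
  refine integral_mono ((integrable_tr_pow hε _).const_mul _) i2 fun Z => ?_
  simp only
  have e : ∑ i, ∑ j, (Matrix.of Z * -∑ m ∈ Finset.range (k + 1),
      resR ε Z ^ (m + 1) * gramE i j Z * resR ε Z ^ (k + 1 - m)) i j
      = -∑ m ∈ Finset.range (k + 1), (trace (resR ε Z ^ (m + 1) * gramS Z * resR ε Z ^ (k + 1 - m))
        + trace (resR ε Z ^ (m + 1) * gramS Z) * trace (resR ε Z ^ (k + 1 - m))) := by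
    have : ∀ m, trace (resR ε Z ^ (m + 1) * gramS Z * resR ε Z ^ (k + 1 - m))
        + trace (resR ε Z ^ (m + 1) * gramS Z) * trace (resR ε Z ^ (k + 1 - m))
        = ∑ i, ∑ j, (Matrix.of Z * (resR ε Z ^ (m + 1) * gramE i j Z * resR ε Z ^ (k + 1 - m))) i j := by
      intro m
      rw [sum_E, resR_pow_isSymm]
    simp only [this, Matrix.mul_neg, Matrix.mul_sum, Matrix.neg_apply, Matrix.sum_apply,
      Finset.sum_neg_distrib]
    congr 1
    rw [Finset.sum_comm (s := Finset.range (k + 1))]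
    refine Finset.sum_congr rfl fun i _ => ?_
    rw [Finset.sum_comm]
  rw [e]
  have hsum : ∑ m ∈ Finset.range (k + 1), (trace (resR ε Z ^ (m + 1) * gramS Z * resR ε Z ^ (k + 1 - m))
        + trace (resR ε Z ^ (m + 1) * gramS Z) * trace (resR ε Z ^ (k + 1 - m)))
      ≤ ∑ m ∈ Finset.range (k + 1), (p + 1) * trace (resR ε Z ^ (k + 1)) := by
    refine Finset.sum_le_sum fun m hm => ?_
    have hm' := Finset.mem_range.1 hm
    have a1 := tr_pow_S_pow_le hε Z m (k + 1 - m)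
    have a2 := tr_cheb hε Z m (k + 1 - m)
    have a3 := mul_le_mul_of_nonneg_right (tr_pow_S_le hε Z m) (tr_nonneg hε Z (k + 1 - m))
    rw [show m + (k + 1 - m) = k + 1 by omega] at a1 a2
    linarith
  rw [Finset.sum_const, Finset.card_range, nsmul_eq_mul] at hsum
  push_cast at hsum
  linarith

theorem abs_trace_le (A : Matrix (Fin p) (Fin p) ℝ) : |trace A| ≤ p * ‖A‖ := by
  simp only [trace, diag_apply]
  refine (Finset.abs_sum_le_sum_abs _ _).trans ?_
  refine (Finset.sum_le_sum fun i _ => entry_le_norm A i i).trans ?_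
  simp

theorem ineqB {ε : ℝ} (hε : 0 < ε) (m : ℕ) :
    ((n : ℝ) - 1 - p - 2 * m) * ∫ Z, trace (resR ε Z) ^ (m + 1) ∂gaussEnsemble n p
      ≤ p * ∫ Z, trace (resR ε Z) ^ m ∂gaussEnsemble n p := by
  obtain ⟨K, hK, hR⟩ := norm_res_le (n := n) (p := p) hε
  have hres := continuous_res (n := n) (p := p) hε
  have hT0 : ∀ Z : Fin n → Fin p → ℝ, 0 ≤ trace (resR ε Z) := fun Z => by
    simpa using tr_nonneg hε Z 1
  have hT : ∀ Z : Fin n → Fin p → ℝ, |trace (resR ε Z)| ≤ p * K := fun Z =>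
    (abs_trace_le _).trans (by gcongr; exact hR Z)
  have hRER : ∀ i j (Z : Fin n → Fin p → ℝ), ‖resR ε Z * gramE i j Z * resR ε Z‖ ≤ 4 * K ^ 2 * qf Z :=
    fun i j Z => norm_AEB hK i j Z _ _ (a := 1) (b := 1) (by simpa using hR Z) (by simpa using hR Z)
  have hcE : ∀ i j, Continuous fun Z : Fin n → Fin p → ℝ => resR ε Z * gramE i j Z * resR ε Z :=
    fun i j => (hres.mul (continuous_gramE i j)).mul hres
  obtain ⟨i1, i2, heq⟩ := stein_matrix (n := n) (p := p) (fun Z => trace (resR ε Z) ^ m • resR ε Z)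
    (fun i j Z => trace (resR ε Z) ^ m • (-(resR ε Z * gramE i j Z * resR ε Z)) +
      (m * trace (resR ε Z) ^ (m - 1) * trace (-(resR ε Z * gramE i j Z * resR ε Z))) • resR ε Z)
    (fun i j Z => by
      have d := hasDerivAt_res hε i j Z
      have dT : HasDerivAt (fun t : ℝ => trace (resR ε (Z + t • dirE i j)))
          (trace (-(resR ε Z * gramE i j Z * resR ε Z))) 0 :=
        HasDerivAt.fun_sum (u := Finset.univ) fun k _ => hasDerivAt_pi.1 (hasDerivAt_pi.1 d k) k
      have := (dT.fun_pow m).fun_smul d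
      simpa using! this)
    ((hres.matrix_trace.pow m).smul hres)
    (fun i j => ((hres.matrix_trace.pow m).smul (hcE i j).neg).add
      (((continuous_const.mul (hres.matrix_trace.pow (m - 1))).mul (hcE i j).neg.matrix_trace).smul hres))
    ((p * K) ^ m * K + ((p * K) ^ m * (4 * K ^ 2) + m * (p * K) ^ (m - 1) * (p * (4 * K ^ 2)) * K))
    (fun Z => by
      refine le_trans ?_ (le_add_of_nonneg_right (by positivity))
      rw [norm_smul, norm_pow]
      exact mul_le_mul (pow_le_pow_left₀ (norm_nonneg _) (hT Z) m) (hR Z) (norm_nonneg _) (by positivity))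
    (fun i j Z => by
      have hq : 0 ≤ qf Z := zero_le_one.trans (one_le_qf Z)
      refine (norm_add_le _ _).trans ?_
      have b1 : ‖trace (resR ε Z * gramE i j Z * resR ε Z)‖ ≤ p * (4 * K ^ 2 * qf Z) :=
        (abs_trace_le _).trans (by gcongr; exact hRER i j Z)
      have b0 := hRER i j Z
      generalize resR ε Z * gramE i j Z * resR ε Z = X at b0 b1 ⊢
      rw [norm_smul, norm_smul, norm_neg, trace_neg, norm_mul, norm_mul, norm_neg, norm_pow, norm_pow,
        RCLike.norm_natCast]
      calc _ ≤ (p * K) ^ m * (4 * K ^ 2 * qf Z)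
            + m * (p * K) ^ (m - 1) * (p * (4 * K ^ 2 * qf Z)) * K := by
            gcongr
            · exact hT Z
            · exact hT Z
            · exact hR Z
        _ = ((p * K) ^ m * (4 * K ^ 2) + m * (p * K) ^ (m - 1) * (p * (4 * K ^ 2)) * K) * qf Z := by ring
        _ ≤ _ := by
          refine mul_le_mul_of_nonneg_right ?_ hq
          have : 0 ≤ (p * K) ^ m * K := by positivity
          linarith)
  have hl : ∫ Z, trace (gramS Z * (trace (resR ε Z) ^ m • resR ε Z)) ∂gaussEnsemble n p
      ≤ p * ∫ Z, trace (resR ε Z) ^ m ∂gaussEnsemble n p := by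
    rw [← integral_const_mul]
    refine integral_mono i1 ((integrable_T_pow hε m).const_mul _) fun Z => ?_
    simp only
    rw [mul_smul_comm, trace_smul, smul_eq_mul, trace_mul_comm, mul_comm]
    have := tr_pow_S_le hε Z 0
    simp at this
    exact mul_le_mul_of_nonneg_right this (pow_nonneg (hT0 Z) m)
  refine le_trans ?_ hl
  rw [heq, ← integral_const_mul]
  refine integral_mono ((integrable_T_pow hε _).const_mul _) i2 fun Z => ?_
  simp only
  set T := trace (resR ε Z) with hTdef
  obtain ⟨Q, hQ⟩ : ∃ Q : Matrix (Fin p) (Fin p) ℝ, Q = resR ε Z ^ 2 := ⟨_, rfl⟩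
  have t1 : ∀ i j, trace (resR ε Z * gramE i j Z * resR ε Z) = 2 * (Matrix.of Z * Q) i j := by
    intro i j
    rw [hQ]
    have a1 : trace (resR ε Z * gramE i j Z * resR ε Z) = trace (gramE i j Z * resR ε Z ^ 2) := by
      rw [mul_assoc, trace_mul_comm, pow_two, mul_assoc]
    have a2 : trace ((Matrix.of Z)ᵀ * Matrix.of (dirE i j) * resR ε Z ^ 2)
        = trace ((Matrix.of (dirE i j))ᵀ * Matrix.of Z * resR ε Z ^ 2) := by
      rw [← trace_transpose, transpose_mul, transpose_mul, transpose_transpose, resR_pow_isSymm,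
        trace_mul_comm]
    rw [a1, gramE, Matrix.add_mul, trace_add, a2, Matrix.mul_assoc, tr_dirE]
    ring
  have e : ∑ i, ∑ j, (Matrix.of Z * (T ^ m • (-(resR ε Z * gramE i j Z * resR ε Z)) +
      (m * T ^ (m - 1) * trace (-(resR ε Z * gramE i j Z * resR ε Z))) • resR ε Z)) i j
      = -(T ^ m * (trace (resR ε Z * gramS Z * resR ε Z) + trace (resR ε Z * gramS Z) * T))
        - 2 * m * T ^ (m - 1) * trace (resR ε Z ^ 2 * gramS Z * resR ε Z) := by
    have s1 := sum_E Z (resR ε Z) (resR ε Z)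
    rw [resR_isSymm] at s1
    have s2 : trace (resR ε Z ^ 2 * gramS Z * resR ε Z)
        = ∑ i, ∑ j, (Matrix.of Z * Q) i j * (Matrix.of Z * resR ε Z) i j := by
      rw [hQ]
      rw [tr_transpose_mul, transpose_mul, resR_pow_isSymm, gramS]
      simp only [Matrix.mul_assoc]
    rw [← s1, s2, Finset.mul_sum, Finset.mul_sum, ← Finset.sum_neg_distrib, ← Finset.sum_sub_distrib]
    refine Finset.sum_congr rfl fun i _ => ?_
    rw [Finset.mul_sum, Finset.mul_sum, ← Finset.sum_neg_distrib, ← Finset.sum_sub_distrib]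
    refine Finset.sum_congr rfl fun j _ => ?_
    simp only [trace_neg, t1, Matrix.mul_add, Matrix.mul_smul, Matrix.mul_neg, Matrix.add_apply,
      Matrix.smul_apply, Matrix.neg_apply, smul_eq_mul]
    ring
  rw [e, trace_smul, smul_eq_mul, ← hTdef]
  have hT0' : 0 ≤ T := hT0 Z
  have b1 := tr_pow_S_pow_le hε Z 0 1
  have b2 := tr_pow_S_le hε Z 0
  have b3 := tr_pow_S_pow_le hε Z 1 1
  have b4 := tr_pow_le hε Z 1
  simp only [zero_add, pow_one, pow_zero, trace_one, Fintype.card_fin, one_add_one_eq_two,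
    ← hTdef] at b1 b2 b3 b4
  have c1 : T ^ m * (trace (resR ε Z * gramS Z * resR ε Z) + trace (resR ε Z * gramS Z) * T)
      ≤ T ^ m * (T + p * T) := by gcongr
  have c2 : 2 * m * T ^ (m - 1) * trace (resR ε Z ^ 2 * gramS Z * resR ε Z) ≤ 2 * m * T ^ (m + 1) := by
    rcases m with _ | m
    · simp
    · have : T ^ (m + 1 + 1) = T ^ m * T ^ 2 := by ring
      rw [this, Nat.add_sub_cancel, mul_assoc]
      gcongr
      exact b3.trans b4
  have : T ^ (m + 1) = T ^ m * T := pow_succ T m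
  rw [this] at c2 ⊢
  nlinarith

/-! ### Passing to the limit -/

theorem T_moment_bound (s : ℕ) (h : p + 4 * s + 2 ≤ n) {ε : ℝ} (hε : 0 < ε) (m : ℕ) (hm : m ≤ s) :
    ∫ Z : Fin n → Fin p → ℝ, trace (resR ε Z) ^ m ∂gaussEnsemble n p ≤ (p : ℝ) ^ m := by
  induction m with
  | zero => simp
  | succ m ih =>
    have h1 := ih (by omega)
    have h2 := ineqB (n := n) (p := p) hε m
    have h3 : (1 : ℝ) ≤ (n : ℝ) - 1 - p - 2 * m := by
      have : p + 2 * m + 2 ≤ n := by omega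
      have : (p : ℝ) + 2 * m + 2 ≤ n := by exact_mod_cast this
      linarith
    have h4 : 0 ≤ ∫ Z : Fin n → Fin p → ℝ, trace (resR ε Z) ^ (m + 1) ∂gaussEnsemble n p :=
      integral_nonneg fun Z => pow_nonneg (by simpa using tr_nonneg hε Z 1) _
    calc _ ≤ ((n : ℝ) - 1 - p - 2 * m) *
          ∫ Z : Fin n → Fin p → ℝ, trace (resR ε Z) ^ (m + 1) ∂gaussEnsemble n p :=
          le_mul_of_one_le_left h4 h3
      _ ≤ _ := h2
      _ ≤ p * (p : ℝ) ^ m := by gcongr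
      _ = _ := by ring

theorem tr_moment_bound (s : ℕ) (h : p + 4 * s + 2 ≤ n) {ε : ℝ} (hε : 0 < ε) (m : ℕ) (hm : m ≤ s) :
    ∫ Z : Fin n → Fin p → ℝ, trace (resR ε Z ^ m) ∂gaussEnsemble n p ≤ (p : ℝ) ^ m + p := by
  rcases m with _ | m
  · simp
  · have h1 := T_moment_bound s h hε (m + 1) hm
    have h2 : ∫ Z : Fin n → Fin p → ℝ, trace (resR ε Z ^ (m + 1)) ∂gaussEnsemble n p
        ≤ ∫ Z : Fin n → Fin p → ℝ, trace (resR ε Z) ^ (m + 1) ∂gaussEnsemble n p :=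
      integral_mono (integrable_tr_pow hε _) (integrable_T_pow hε _) fun Z => tr_pow_le hε Z m
    have : (0 : ℝ) ≤ p := Nat.cast_nonneg p
    linarith

theorem ae_det_ne_zero (s : ℕ) (hs : 1 ≤ s) (h : p + 4 * s + 2 ≤ n) :
    ∀ᵐ Z ∂gaussEnsemble n p, (gramS Z).det ≠ 0 := by
  rw [ae_iff]
  simp only [not_not]
  set A : Set (Fin n → Fin p → ℝ) := {Z | (gramS Z).det = 0} with hA
  have key : ∀ ε : ℝ, 0 < ε → (gaussEnsemble n p).real A ≤ p * ε := by
    intro ε hε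
    have h1 := T_moment_bound s h hε 1 hs
    simp only [pow_one] at h1
    have hInt := integrable_T_pow (n := n) (p := p) hε 1
    simp only [pow_one] at hInt
    have h2 := mul_meas_ge_le_integral_of_nonneg
      (Eventually.of_forall fun Z => by simpa using tr_nonneg hε Z 1) hInt ε⁻¹
    have h3 : A ⊆ {Z | ε⁻¹ ≤ trace (resR ε Z)} := by
      intro Z hZ
      obtain ⟨l, h0, hd, ht⟩ := gramS_spec Z
      have hp : ∀ i, 0 < l i + ε := fun i => by have := h0 i; positivity
      have hd0 := hd 0
      have hZ' : (gramS Z).det = 0 := hZ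
      simp only [zero_smul, add_zero, hZ'] at hd0
      obtain ⟨i, -, hi⟩ := Finset.prod_eq_zero_iff.1 hd0.symm
      have h1 := ht ε (fun i => (hp i).ne') 1
      simp only [pow_one] at h1
      simp only [Set.mem_ofPred_eq, h1]
      have := Finset.single_le_sum (f := fun i => (l i + ε)⁻¹)
        (fun j _ => inv_nonneg.2 (hp j).le) (Finset.mem_univ i)
      simpa [hi] using this
    have h4 : (gaussEnsemble n p).real A ≤ (gaussEnsemble n p).real {Z | ε⁻¹ ≤ trace (resR ε Z)} :=
      measureReal_mono h3
    have h5 : ε⁻¹ * (gaussEnsemble n p).real A ≤ p :=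
      (mul_le_mul_of_nonneg_left h4 (inv_nonneg.2 hε.le)).trans (h2.trans h1)
    rw [inv_mul_le_iff₀ hε] at h5
    linarith
  have h0 : (gaussEnsemble n p).real A ≤ 0 := by
    refine le_of_forall_pos_le_add fun δ hδ => ?_
    have hp : (0 : ℝ) < p + 1 := by positivity
    have := key (δ / (p + 1)) (by positivity)
    refine this.trans ?_
    rw [zero_add, mul_div_assoc', div_le_iff₀ hp]
    nlinarith
  have h1 : (gaussEnsemble n p).real A = 0 := le_antisymm h0 measureReal_nonneg
  rwa [measureReal_eq_zero_iff] at h1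

/-- regularisation sequence -/
def epsSeq (k : ℕ) : ℝ := 1 / ((k : ℝ) + 1)

theorem epsSeq_pos (k : ℕ) : 0 < epsSeq k := by unfold epsSeq; positivity

theorem epsSeq_tendsto : Tendsto epsSeq atTop (𝓝 0) := tendsto_one_div_add_atTop_nhds_zero_nat

theorem pt_facts (Z : Fin n → Fin p → ℝ) (hZ : (gramS Z).det ≠ 0) (m : ℕ) :
    Tendsto (fun k => trace (resR (epsSeq k) Z ^ m)) atTop (𝓝 (trace (resR 0 Z ^ m))) ∧
    ∀ k, trace (resR (epsSeq k) Z ^ m) ≤ trace (resR 0 Z ^ m) := by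
  obtain ⟨l, h0, hd, ht⟩ := gramS_spec Z
  have hd0 := hd 0
  simp only [zero_smul, add_zero] at hd0
  rw [hd0, Finset.prod_ne_zero_iff] at hZ
  have hl : ∀ i, 0 < l i := fun i => lt_of_le_of_ne (h0 i) (hZ i (Finset.mem_univ i)).symm
  have e0 := ht 0 (fun i => by simpa using (hl i).ne') m
  have e1 : ∀ k, trace (resR (epsSeq k) Z ^ m) = ∑ i, ((l i + epsSeq k)⁻¹) ^ m := fun k =>
    ht _ (fun i => (add_pos (hl i) (epsSeq_pos k)).ne') m
  simp only [e0, e1]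
  constructor
  · refine tendsto_finsetSum _ fun i _ => ?_
    refine ((epsSeq_tendsto.const_add (l i)).inv₀ ?_).pow m
    simpa using (hl i).ne'
  · intro k
    refine Finset.sum_le_sum fun i _ => ?_
    have := hl i
    have := epsSeq_pos k
    rw [add_zero]
    gcongr
    linarith

theorem limit_facts (s : ℕ) (hs : 1 ≤ s) (h : p + 4 * s + 2 ≤ n) (m : ℕ) (hm : m ≤ s) :
    Integrable (fun Z : Fin n → Fin p → ℝ => trace (resR 0 Z ^ m)) (gaussEnsemble n p) ∧
    Tendsto (fun k => ∫ Z : Fin n → Fin p → ℝ, trace (resR (epsSeq k) Z ^ m) ∂gaussEnsemble n p)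
      atTop (𝓝 (∫ Z, trace (resR 0 Z ^ m) ∂gaussEnsemble n p)) := by
  have hae := ae_det_ne_zero s hs h
  have hlim : ∀ᵐ Z ∂gaussEnsemble n p,
      Tendsto (fun k => trace (resR (epsSeq k) Z ^ m)) atTop (𝓝 (trace (resR 0 Z ^ m))) := by
    filter_upwards [hae] with Z hZ using (pt_facts Z hZ m).1
  have hmeas := fun k => (integrable_tr_pow (n := n) (p := p) (epsSeq_pos k) m).1
  have hInt : Integrable (fun Z : Fin n → Fin p → ℝ => trace (resR 0 Z ^ m)) (gaussEnsemble n p) := by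
    refine ⟨aestronglyMeasurable_of_tendsto_ae atTop hmeas hlim, ?_⟩
    have h1 : ∫⁻ Z, ‖trace (resR 0 Z ^ m)‖ₑ ∂gaussEnsemble n p ≤
        liminf (fun k => ∫⁻ Z, ‖trace (resR (epsSeq k) Z ^ m)‖ₑ ∂gaussEnsemble n p) atTop :=
      (lintegral_congr_ae (by filter_upwards [hlim] with x hx using hx.enorm.liminf_eq.symm)).trans_le
        (MeasureTheory.lintegral_liminf_le' fun k => (hmeas k).enorm)
    refine lt_of_le_of_lt (h1.trans ?_) (ENNReal.ofReal_lt_top (r := (p : ℝ) ^ m + p))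
    refine liminf_le_of_le (by isBoundedDefault) ?_
    intro b hb
    obtain ⟨k, hk⟩ := hb.exists
    refine hk.trans ?_
    rw [← ofReal_integral_norm_eq_lintegral_enorm (integrable_tr_pow (epsSeq_pos k) m)]
    refine ENNReal.ofReal_le_ofReal ?_
    have e : ∀ Z : Fin n → Fin p → ℝ, ‖trace (resR (epsSeq k) Z ^ m)‖ = trace (resR (epsSeq k) Z ^ m) :=
      fun Z => Real.norm_of_nonneg (tr_nonneg (epsSeq_pos k) Z m)
    simp only [e]
    exact tr_moment_bound s h (epsSeq_pos k) m hm
  refine ⟨hInt, tendsto_integral_of_dominated_convergence _ hmeas hInt (fun k => ?_) hlim⟩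
  filter_upwards [hae] with Z hZ
  rw [Real.norm_of_nonneg (tr_nonneg (epsSeq_pos k) Z m)]
  exact (pt_facts Z hZ m).2 k

theorem wishart_inv (hn : 1 ≤ n) (Z : Fin n → Fin p → ℝ) (m : ℕ) :
    trace ((wishartOf Z)⁻¹ ^ m) = (n : ℝ) ^ m * trace (resR 0 Z ^ m) := by
  have hn' : (n : ℝ) ≠ 0 := by positivity
  have : (wishartOf Z)⁻¹ = (n : ℝ) • resR 0 Z := by
    unfold wishartOf resR
    rw [zero_smul, add_zero]
    change ((n : ℝ)⁻¹ • gramS Z)⁻¹ = _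
    by_cases hd : IsUnit (gramS Z).det
    · apply inv_eq_right_inv
      rw [smul_mul_smul_comm, inv_mul_cancel₀ hn', mul_nonsing_inv _ hd, one_smul]
    · rw [nonsing_inv_apply_not_isUnit _ hd, smul_zero, nonsing_inv_apply_not_isUnit]
      rw [det_smul]
      intro hu
      exact hd (isUnit_of_mul_isUnit_right hu)
  rw [this, smul_pow, trace_smul, smul_eq_mul]

end helpers

/-- (Stein recursion for inverse Wishart moments.)  For integers
`n, p, s ≥ 1` with `n ≥ p + 4s + 2`, the traces `tr(Y^{-s})` and `tr(Y^{-(s-1)})` are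
integrable under `μ_{n,p}` and `(1 - (p+1)s/n) E[tr Y^{-s}] ≤ E[tr Y^{-(s-1)}]`. -/
theorem inverse_wishart_trace_recursion (n p s : ℕ) (hn : 1 ≤ n) (hp : 1 ≤ p) (hs : 1 ≤ s)
    (h : p + 4 * s + 2 ≤ n) :
    Integrable (fun Z : Fin n → Fin p → ℝ => Matrix.trace ((wishartOf Z)⁻¹ ^ s))
      (gaussEnsemble n p) ∧
    Integrable (fun Z : Fin n → Fin p → ℝ => Matrix.trace ((wishartOf Z)⁻¹ ^ (s - 1)))
      (gaussEnsemble n p) ∧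
    (1 - ((p : ℝ) + 1) * s / n) *
        ∫ Z, Matrix.trace ((wishartOf Z)⁻¹ ^ s) ∂gaussEnsemble n p
      ≤ ∫ Z, Matrix.trace ((wishartOf Z)⁻¹ ^ (s - 1)) ∂gaussEnsemble n p := by
  obtain ⟨k, rfl⟩ : ∃ k, s = k + 1 := ⟨s - 1, by omega⟩
  obtain ⟨i1, t1⟩ := limit_facts (n := n) (p := p) (k + 1) hs h (k + 1) le_rfl
  obtain ⟨i0, t0⟩ := limit_facts (n := n) (p := p) (k + 1) hs h k (by omega)
  simp only [wishart_inv hn, Nat.add_sub_cancel]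
  refine ⟨i1.const_mul _, i0.const_mul _, ?_⟩
  rw [integral_const_mul, integral_const_mul]
  have key := le_of_tendsto_of_tendsto' (t1.const_mul ((n : ℝ) - (p + 1) * (k + 1))) t0
    fun j => ineqA (epsSeq_pos j) k
  have hn' : (n : ℝ) ≠ 0 := by positivity
  have := mul_le_mul_of_nonneg_left key (show (0 : ℝ) ≤ (n : ℝ) ^ k by positivity)
  refine le_trans (le_of_eq ?_) this
  push_cast
  field_simp
  try ring
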